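/- For every fixed k ∈ ℕ, lim_{n→∞} k! · S_{n,k} / n^{2k} = 1. -/

import Mathlib

/-!
`sameHeightFree n k` is the `k`-th elementary symmetric sum `e_k` of the heights. Marking one
element of each `(k+1)`-subset gives `(k+1) e_{k+1} = ∑_s (∏_{i ∈ s} l_i) (∑_{i ∉ s} l_i)`, the
outer sum over `k`-subsets `s` (`succ_mul_sum_powersetCard_succ`). The heights add up to `n²`
and each is at most `n`, so the inner sum lies between `n² - kn` and `n²`. Hence the normalised
quantities `a_k(n) = k! e_k / n^{2k}` satisfy `a_k (1 - k/n) ≤ a_{k+1} ≤ a_k`, and the limit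
follows by induction on `k` and squeezing.
-/

/-- `l n i` is the number of blocks at height `i` in an `n × n` grid tilted by 45°:
`l n i = i` for `1 ≤ i ≤ n` and `l n i = 2n - i` for `n < i ≤ 2n - 1`. -/
def tiltedHeight (n i : ℕ) : ℕ := if i ≤ n then i else 2 * n - i

/-- `S n k` is the number of configurations of `k` blocks in the tilted `n × n` grid with
no two blocks at the same height. -/
def sameHeightFree (n k : ℕ) : ℕ :=
  ∑ s ∈ (Finset.Icc 1 (2 * n - 1)).powersetCard k, ∏ i ∈ s, tiltedHeight n i

/-- Double counting of pairs `(t, i)` with `i ∈ t` and `t` a `(k+1)`-subset of `A`, via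
`(t, i) ↦ (t \ {i}, i)`. -/
theorem succ_mul_sum_powersetCard_succ (A : Finset ℕ) (f : ℕ → ℕ) (k : ℕ) :
    (k + 1) * ∑ t ∈ A.powersetCard (k + 1), ∏ i ∈ t, f i =
      ∑ s ∈ A.powersetCard k, (∏ i ∈ s, f i) * ∑ i ∈ A \ s, f i := by
  have h : (k + 1) * ∑ t ∈ A.powersetCard (k + 1), ∏ i ∈ t, f i =
      ∑ t ∈ A.powersetCard (k + 1), ∑ _j ∈ t, ∏ i ∈ t, f i := by
    rw [Finset.mul_sum]
    refine Finset.sum_congr rfl fun t ht => ?_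
    simp [(Finset.mem_powersetCard.1 ht).2]
  rw [h]
  simp_rw [Finset.mul_sum]
  rw [Finset.sum_sigma', Finset.sum_sigma']
  refine Finset.sum_bij' (fun x _ => ⟨x.1.erase x.2, x.2⟩) (fun x _ => ⟨insert x.2 x.1, x.2⟩)
    ?_ ?_ ?_ ?_ ?_
  · rintro ⟨t, i⟩ hx
    simp only [Finset.mem_sigma, Finset.mem_powersetCard, Finset.mem_sdiff] at hx ⊢
    obtain ⟨⟨hA, hc⟩, hi⟩ := hx
    refine ⟨⟨(Finset.erase_subset _ _).trans hA, ?_⟩, hA hi, Finset.notMem_erase _ _⟩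
    rw [Finset.card_erase_of_mem hi, hc, Nat.add_sub_cancel]
  · rintro ⟨s, i⟩ hx
    simp only [Finset.mem_sigma, Finset.mem_powersetCard, Finset.mem_sdiff] at hx ⊢
    obtain ⟨⟨hA, hc⟩, hiA, hi⟩ := hx
    refine ⟨⟨Finset.insert_subset hiA hA, ?_⟩, Finset.mem_insert_self _ _⟩
    rw [Finset.card_insert_of_notMem hi, hc]
  · rintro ⟨t, i⟩ hx
    simp only [Finset.mem_sigma] at hx
    simp [Finset.insert_erase hx.2]
  · rintro ⟨s, i⟩ hx
    simp only [Finset.mem_sigma, Finset.mem_sdiff] at hx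
    simp [Finset.erase_insert hx.2.2]
  · rintro ⟨t, i⟩ hx
    simp only [Finset.mem_sigma] at hx
    exact (Finset.prod_erase_mul t f hx.2).symm

theorem tiltedHeight_le (n i : ℕ) : tiltedHeight n i ≤ n := by
  unfold tiltedHeight
  split_ifs <;> omega

/-- The heights count all blocks: those at heights `i` and `n + i` number `n` in total,
for each `0 ≤ i < n`. -/
theorem sum_tiltedHeight (n : ℕ) :
    ∑ i ∈ Finset.Icc 1 (2 * n - 1), tiltedHeight n i = n * n := by
  -- Height `0` carries no block, so it may be included.
  have h : ∑ i ∈ Finset.Icc 1 (2 * n - 1), tiltedHeight n i =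
      ∑ i ∈ Finset.range (n + n), tiltedHeight n i := by
    refine Finset.sum_subset (fun i hi => ?_) (fun i hi hi' => ?_)
    · simp only [Finset.mem_Icc, Finset.mem_range] at *
      omega
    · simp only [Finset.mem_Icc, Finset.mem_range] at *
      have : i = 0 := by omega
      simp [this, tiltedHeight]
  rw [h, Finset.sum_range_add, ← Finset.sum_add_distrib, Finset.sum_congr rfl (g := fun _ => n)]
  · simp
  · intro i hi
    simp only [Finset.mem_range] at hi
    unfold tiltedHeight
    split_ifs <;> omega

theorem succ_mul_sameHeightFree_succ_le (n k : ℕ) :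
    (k + 1) * sameHeightFree n (k + 1) ≤ sameHeightFree n k * (n * n) := by
  unfold sameHeightFree
  rw [succ_mul_sum_powersetCard_succ, Finset.sum_mul]
  refine Finset.sum_le_sum fun s _ => Nat.mul_le_mul_left _ ?_
  rw [← sum_tiltedHeight]
  exact Finset.sum_le_sum_of_subset Finset.sdiff_subset

theorem sameHeightFree_mul_le (n k : ℕ) :
    sameHeightFree n k * (n * n) ≤
      (k + 1) * sameHeightFree n (k + 1) + sameHeightFree n k * (k * n) := by
  unfold sameHeightFree
  rw [succ_mul_sum_powersetCard_succ, Finset.sum_mul, Finset.sum_mul, ← Finset.sum_add_distrib]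
  refine Finset.sum_le_sum fun s hs => ?_
  obtain ⟨hA, hc⟩ := Finset.mem_powersetCard.1 hs
  rw [← mul_add]
  refine Nat.mul_le_mul_left _ ?_
  rw [← sum_tiltedHeight, ← Finset.sum_sdiff hA, ← hc]
  gcongr
  exact Finset.sum_le_card_nsmul s _ n fun i _ => tiltedHeight_le n i

/-- For every fixed `k ∈ ℕ`, `lim_{n → ∞} k! · S_{n,k} / n^{2k} = 1`. -/
theorem factorial_mul_sameHeightFree_div_tendsto_one (k : ℕ) :
    Filter.Tendsto
      (fun n : ℕ => ((k.factorial : ℝ) * (sameHeightFree n k : ℝ)) / (n : ℝ) ^ (2 * k))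
      Filter.atTop (nhds 1) := by
  induction k with
  | zero => simp [sameHeightFree]
  | succ k ih =>
    have hlow : Filter.Tendsto (fun n : ℕ => ((k.factorial : ℝ) * (sameHeightFree n k : ℝ)) /
        (n : ℝ) ^ (2 * k) * (1 - (k : ℝ) / n)) Filter.atTop (nhds 1) := by
      simpa using ih.mul ((tendsto_const_div_atTop_nhds_zero_nat (k : ℝ)).const_sub 1)
    refine tendsto_of_tendsto_of_tendsto_of_le_of_le' hlow ih ?_ ?_
    · filter_upwards [Filter.eventually_gt_atTop 0] with n hn
      have hn' : (0 : ℝ) < n := Nat.cast_pos.2 hn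
      have h : (sameHeightFree n k : ℝ) * (n * n) ≤
          (k + 1) * sameHeightFree n (k + 1) + sameHeightFree n k * (k * n) := by
        exact_mod_cast sameHeightFree_mul_le n k
      have e : ((k.factorial : ℝ) * (sameHeightFree n k : ℝ)) / (n : ℝ) ^ (2 * k) *
          (1 - (k : ℝ) / n) = (k.factorial : ℝ) * (sameHeightFree n k * (n * n) -
            sameHeightFree n k * (k * n)) / (n : ℝ) ^ (2 * (k + 1)) := by
        field_simp
        try ring
      rw [e, Nat.factorial_succ, Nat.cast_mul, mul_comm ((k + 1 : ℕ) : ℝ), mul_assoc]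
      push_cast
      gcongr
      linarith
    · filter_upwards [Filter.eventually_gt_atTop 0] with n hn
      have hn' : (0 : ℝ) < n := Nat.cast_pos.2 hn
      have h : ((k : ℝ) + 1) * sameHeightFree n (k + 1) ≤ sameHeightFree n k * (n * n) := by
        exact_mod_cast succ_mul_sameHeightFree_succ_le n k
      have e : ((k.factorial : ℝ) * (sameHeightFree n k : ℝ)) / (n : ℝ) ^ (2 * k) =
          (k.factorial : ℝ) * (sameHeightFree n k * (n * n)) / (n : ℝ) ^ (2 * (k + 1)) := by
        field_simp
        try ring
      rw [e, Nat.factorial_succ, Nat.cast_mul, mul_comm ((k + 1 : ℕ) : ℝ), mul_assoc]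
      push_cast
      gcongr
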